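/- Let T be a triangulation of a surface, and for each triangle Δijk let α^i_{jk}, α^j_{ik}, α^k_{ij} be real numbers with α^i_{jk} + α^j_{ik} + α^k_{ij} = 0. Define the antisymmetric edge flow x by x_{ij} = (α^i_{jk} - α^j_{ik})/3 + (α^i_{jk'} - α^j_{ik'})/3 for an interior edge ij with adjacent triangles Δijk, Δijk', and x_{ij} = (α^i_{jk} - α^j_{ik})/3 for a boundary edge ij contained in triangle Δijk. Then for every interior vertex i, the divergence satisfies div(x)_i = Σ_{j ~ i} x_{ij} = Σ_{Δijk ∋ i} α^i_{jk}. -/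

import Mathlib

attribute [local instance] Classical.propDecidable

/-- Combinatorial divergence identity: let `F` be the set of faces (3-element vertex sets)
of a triangulation, with each edge contained in at most two faces, and for each face let
the numbers `α i f` (for `i ∈ f`) sum to zero. Define the antisymmetric edge flow
`x i j = (1/3) Σ_{f ⊇ {i,j}} (α i f - α j f)` (which agrees with
`(αⁱ_{jk} - αʲ_{ik})/3 + (αⁱ_{jk'} - αʲ_{ik'})/3` on interior edges and
`(αⁱ_{jk} - αʲ_{ik})/3` on boundary edges). Then at every interior vertex `i` (each edge
at `i` lies in exactly two faces), `div(x)_i = Σ_{j ~ i} x i j = Σ_{f ∋ i} α i f`. -/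
theorem divergence_of_angle_error_flow {V : Type*} [Fintype V]
    (F : Finset (Finset V)) (hF : ∀ f ∈ F, f.card = 3)
    (α : V → Finset V → ℝ)
    (hα : ∀ f ∈ F, ∑ i ∈ f, α i f = 0)
    (hedge : ∀ i j : V, i ≠ j → (F.filter (fun f => i ∈ f ∧ j ∈ f)).card ≤ 2)
    (x : V → V → ℝ)
    (hx : ∀ i j : V, x i j = (1 / 3) * ∑ f ∈ F.filter (fun f => i ∈ f ∧ j ∈ f),
        (α i f - α j f))
    (i : V)
    (hinterior : ∀ j : V, j ≠ i → (∃ f ∈ F, i ∈ f ∧ j ∈ f) →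
        (F.filter (fun f => i ∈ f ∧ j ∈ f)).card = 2) :
    ∑ j ∈ Finset.univ.filter (fun j => j ≠ i ∧ ∃ f ∈ F, i ∈ f ∧ j ∈ f), x i j
      = ∑ f ∈ F.filter (fun f => i ∈ f), α i f := by
  have hsupp : ∑ j ∈ Finset.univ.filter (fun j => j ≠ i ∧ ∃ f ∈ F, i ∈ f ∧ j ∈ f), x i j
      = ∑ j, x i j := by
    refine Finset.sum_subset (Finset.subset_univ _) fun j _ hj => ?_
    rw [hx]
    refine mul_eq_zero_of_right _ (Finset.sum_eq_zero fun f hf => ?_)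
    rw [Finset.mem_filter] at hf
    by_cases hji : j = i
    · rw [hji, sub_self]
    · exact absurd (Finset.mem_filter.2 ⟨Finset.mem_univ j, hji, f, hf⟩) hj
  have hswap : ∑ j, ∑ f ∈ F.filter (fun f => i ∈ f ∧ j ∈ f), (α i f - α j f)
      = ∑ f ∈ F.filter (fun f => i ∈ f), ∑ j ∈ f, (α i f - α j f) :=
    Finset.sum_comm' fun j f => by simp only [Finset.mem_filter, Finset.mem_univ]; tauto
  rw [hsupp, Finset.sum_congr rfl fun j _ => hx i j, ← Finset.mul_sum, hswap, Finset.mul_sum]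
  refine Finset.sum_congr rfl fun f hf => ?_
  have hfF := (Finset.mem_filter.1 hf).1
  rw [Finset.sum_sub_distrib, hα f hfF, Finset.sum_const, hF f hfF, nsmul_eq_mul]
  push_cast
  ring
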